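/- arXiv:1707.08875 — 2 statements merged into one kernel-verified Lean document; each statement's English description precedes it below -/
import Mathlib

section
/- Let {J_{ij} = J_{ji}}_{1≤i<j≤N} be any nonnegative real symmetric couplings and H(σ) = −(1/N) Σ_{1≤i<j≤N} J_{ij} σ_i σ_j. If there exist two bully bonds (i,j) and (k,l) with {i,j} ∩ {k,l} = ∅, then H has a nontrivial local minimum on {±1}^N: there exists σ ∈ {±1}^N with σ ∉ {(1,...,1), (−1,...,−1)} such that H(σ') ≥ H(σ) for every σ' at Hamming distance 1 from σ. -/
open MeasureTheory ProbabilityTheory Filter Finset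

/-- Hamiltonian of the disordered Curie--Weiss model:
`H(σ) = -(1/N) ∑_{i<j} J_{ij} σ_i σ_j`. -/
noncomputable def Ham {N : ℕ} (J : Fin N → Fin N → ℝ) (σ : Fin N → ℤ) : ℝ :=
  -(1 / (N : ℝ)) * ∑ q ∈ Finset.univ.filter (fun q : Fin N × Fin N => q.1 < q.2),
      J q.1 q.2 * (σ q.1 : ℝ) * (σ q.2 : ℝ)

/-- `(i,j)` is a bully bond: `J_{ij} > max(∑_{k∉{i,j}} J_{ik}, ∑_{k∉{i,j}} J_{jk})`. -/
def IsBullyBond {N : ℕ} (J : Fin N → Fin N → ℝ) (i j : Fin N) : Prop :=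
  i ≠ j ∧
    max (∑ k ∈ (Finset.univ.erase i).erase j, J i k)
      (∑ k ∈ (Finset.univ.erase i).erase j, J j k) < J i j

/-- `σ` is a nontrivial local minimum of `H`: it is a `±1` configuration, not one of the two
uniform ground states, and no single spin flip strictly decreases the energy. -/
def IsNontrivialLocalMin {N : ℕ} (J : Fin N → Fin N → ℝ) (σ : Fin N → ℤ) : Prop :=
  (∀ i, σ i = 1 ∨ σ i = -1) ∧ σ ≠ (fun _ => 1) ∧ σ ≠ (fun _ => -1) ∧
    ∀ i, Ham J σ ≤ Ham J (Function.update σ i (-σ i))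

/-!
Call a bond `{i, j}` satisfied by `σ` when `J i j * σ i * σ j ≥ 0`. If `{i, j}` is a bully bond for
the absolute couplings `|J|`, then as long as it is satisfied it outweighs all other interactions of
`i` and of `j` together, so flipping either end cannot lower the energy, whatever the remaining
spins are. Pin the four ends of two disjoint bully bonds so that both bonds are satisfied, with
`σ i = 1` and `σ k = -1`, and minimise the energy over the remaining spins: the minimiser is stable
at the free sites by minimality and at the pinned sites by the previous remark, and it is not
constant.
-/

section Spins

variable {ι : Type*}

/-- Configurations of Ising spins, encoded as integer-valued functions with values `±1`. -/
def IsSpinConfig (σ : ι → ℤ) : Prop :=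
  ∀ m, σ m = 1 ∨ σ m = -1

theorem IsSpinConfig.abs_apply {σ : ι → ℤ} (hσ : IsSpinConfig σ) (m : ι) : |(σ m : ℝ)| = 1 := by
  rcases hσ m with h | h <;> simp [h]

theorem IsSpinConfig.update_neg [DecidableEq ι] {σ : ι → ℤ} (hσ : IsSpinConfig σ) (a : ι) :
    IsSpinConfig (Function.update σ a (-σ a)) := by
  intro m
  obtain rfl | hm := eq_or_ne m a
  · simpa [neg_eq_iff_eq_neg, or_comm] using hσ m
  · simpa [hm] using hσ m

theorem finite_setOf_isSpinConfig [Finite ι] : {σ : ι → ℤ | IsSpinConfig σ}.Finite :=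
  Set.Finite.pi' fun _ => Set.toFinite {1, -1}

theorem exists_isSpinConfig_eqOn_forall_le_update_neg [Finite ι] [DecidableEq ι] {α : Type*}
    [LinearOrder α] (E : (ι → ℤ) → α) (P : Set ι) {τ : ι → ℤ} (hτ : IsSpinConfig τ)
    (hP : ∀ σ, IsSpinConfig σ → Set.EqOn σ τ P →
      ∀ a ∈ P, E σ ≤ E (Function.update σ a (-σ a))) :
    ∃ σ, IsSpinConfig σ ∧ Set.EqOn σ τ P ∧ ∀ a, E σ ≤ E (Function.update σ a (-σ a)) := by
  obtain ⟨σ, ⟨hσ, hστ⟩, hmin⟩ := Set.exists_min_image {σ | IsSpinConfig σ ∧ Set.EqOn σ τ P} E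
    (finite_setOf_isSpinConfig.subset fun _ h => h.1) ⟨τ, hτ, Set.eqOn_refl τ P⟩
  refine ⟨σ, hσ, hστ, fun a => ?_⟩
  by_cases ha : a ∈ P
  · exact hP σ hσ hστ a ha
  · refine hmin _ ⟨hσ.update_neg a, fun m hm => ?_⟩
    rw [Function.update_of_ne (ne_of_mem_of_not_mem hm ha), hστ hm]

theorem exists_sign_mul_nonneg (x : ℝ) : ∃ s : ℤ, (s = 1 ∨ s = -1) ∧ 0 ≤ x * s := by
  rcases le_total 0 x with hx | hx
  · exact ⟨1, by simp, by simpa using hx⟩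
  · exact ⟨-1, by simp, by simpa using hx⟩

theorem exists_isSpinConfig_satisfying_bonds (J : ι → ι → ℝ) {i j k l : ι} (hij : i ≠ j)
    (hkl : k ≠ l) (hdisj : Disjoint ({i, j} : Set ι) {k, l}) :
    ∃ τ : ι → ℤ, IsSpinConfig τ ∧ τ i = 1 ∧ τ k = -1 ∧
      0 ≤ J i j * τ i * τ j ∧ 0 ≤ J k l * τ k * τ l := by
  classical
  obtain ⟨⟨hik, hjk⟩, hil, hjl⟩ : (k ≠ i ∧ k ≠ j) ∧ l ≠ i ∧ l ≠ j := by
    simpa [Set.disjoint_right] using hdisj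
  obtain ⟨s, hs, hsJ⟩ := exists_sign_mul_nonneg (J i j)
  obtain ⟨t, ht, htJ⟩ := exists_sign_mul_nonneg (-J k l)
  refine ⟨fun m => if m = i then 1 else if m = j then s else if m = k then -1 else t,
    fun m => ?_, ?_⟩
  · dsimp only
    split_ifs <;> simp [hs, ht]
  · simp_all [hij.symm, hkl.symm]

end Spins

theorem sum_filter_lt_eq_sum_erase {ι M : Type*} [Fintype ι] [LinearOrder ι] [AddCommMonoid M]
    {f : ι → ι → M} {a : ι} (hsymm : ∀ m, f a m = f m a)
    (hsupp : ∀ x y, x ≠ a → y ≠ a → f x y = 0) :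
    ∑ q ∈ univ.filter (fun q : ι × ι => q.1 < q.2), f q.1 q.2 = ∑ m ∈ univ.erase a, f a m := by
  refine (sum_of_injOn (fun m => (min a m, max a m)) ?_ ?_ ?_ ?_).symm
  · intro m _ n _ h
    grind
  · intro m hm
    simpa using ne_of_mem_erase hm
  · rintro ⟨x, y⟩ hxy hout
    have hlt : x < y := (mem_filter.1 hxy).2
    refine hsupp x y (fun hx => hout ⟨y, ?_⟩) (fun hy => hout ⟨x, ?_⟩)
    · simp [← hx, hlt.ne', hlt.le]
    · simp [← hy, hlt.ne, hlt.le]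
  · intro m _
    rcases le_total a m with h | h
    · simp [h]
    · simp [h, hsymm m]

section Hamiltonian

variable {N : ℕ} {J : Fin N → Fin N → ℝ}

/-- The field that the other spins exert on site `a`, without the factor `1 / N`; the energy
depends on the spin at `a` only through its product with this field. -/
noncomputable def localField (J : Fin N → Fin N → ℝ) (σ : Fin N → ℤ) (a : Fin N) : ℝ :=
  ∑ m ∈ univ.erase a, J a m * σ m

theorem Ham_update_sub_Ham {a : Fin N} (hsym : ∀ m, J a m = J m a) (σ : Fin N → ℤ) (s : ℤ) :
    Ham J (Function.update σ a s) - Ham J σ = 1 / N * ((σ a - s) * localField J σ a) := by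
  let τ := Function.update σ a s
  have hsum : ∑ q ∈ univ.filter (fun q : Fin N × Fin N => q.1 < q.2),
      (J q.1 q.2 * σ q.1 * σ q.2 - J q.1 q.2 * τ q.1 * τ q.2) =
        ∑ m ∈ univ.erase a, (J a m * σ a * σ m - J a m * τ a * τ m) :=
    sum_filter_lt_eq_sum_erase (f := fun x y => J x y * σ x * σ y - J x y * τ x * τ y)
      (fun m => by rw [hsym m]; ring) (fun x y hx hy => by simp [τ, hx, hy])
  have hfield : ∑ m ∈ univ.erase a, (J a m * σ a * σ m - J a m * τ a * τ m) =
      (σ a - s) * localField J σ a := by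
    rw [localField, mul_sum]
    refine sum_congr rfl fun m hm => ?_
    simp only [τ, Function.update_self, Function.update_of_ne (ne_of_mem_erase hm)]
    ring
  rw [hfield, sum_sub_distrib] at hsum
  unfold Ham
  linear_combination (1 / (N : ℝ)) * hsum

theorem Ham_le_Ham_update_neg_of_mul_localField_nonneg {σ : Fin N → ℤ} {a : Fin N}
    (hsym : ∀ m, J a m = J m a) (h : 0 ≤ σ a * localField J σ a) :
    Ham J σ ≤ Ham J (Function.update σ a (-σ a)) := by
  have hcost : Ham J (Function.update σ a (-σ a)) - Ham J σ =
      2 / N * (σ a * localField J σ a) := by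
    rw [Ham_update_sub_Ham hsym]
    push_cast
    ring
  rw [← sub_nonneg, hcost]
  positivity

theorem IsBullyBond.symm (hsym : ∀ i j, J i j = J j i) {i j : Fin N} (h : IsBullyBond J i j) :
    IsBullyBond J j i := by
  refine ⟨h.1.symm, ?_⟩
  rw [hsym j i, max_comm, erase_right_comm]
  exact h.2

theorem IsBullyBond.mul_localField_nonneg {i j : Fin N}
    (h : IsBullyBond (fun a b => |J a b|) i j) {σ : Fin N → ℤ} (hσ : IsSpinConfig σ)
    (hsat : 0 ≤ J i j * σ i * σ j) : 0 ≤ σ i * localField J σ i := by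
  have habs (m : Fin N) : |J i m * σ i * σ m| = |J i m| := by
    simp [abs_mul, hσ.abs_apply]
  calc
    0 ≤ |J i j| - ∑ m ∈ (univ.erase i).erase j, |J i m| :=
      sub_nonneg.2 ((le_max_left _ _).trans h.2.le)
    _ = J i j * σ i * σ j + ∑ m ∈ (univ.erase i).erase j, -|J i m * σ i * σ m| := by
      rw [sum_neg_distrib, ← sub_eq_add_neg, ← abs_of_nonneg hsat, habs j]
      simp only [habs]
    _ ≤ J i j * σ i * σ j + ∑ m ∈ (univ.erase i).erase j, J i m * σ i * σ m := by
      gcongr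
      exact neg_abs_le _
    _ = ∑ m ∈ univ.erase i, J i m * σ i * σ m :=
      add_sum_erase _ (fun m => J i m * σ i * σ m) (mem_erase.2 ⟨h.1.symm, mem_univ j⟩)
    _ = σ i * localField J σ i := by
      rw [localField, mul_sum]
      exact sum_congr rfl fun m _ => by ring

theorem IsBullyBond.Ham_le_Ham_update_neg (hsym : ∀ i j, J i j = J j i) {i j : Fin N}
    (h : IsBullyBond (fun a b => |J a b|) i j) {σ : Fin N → ℤ} (hσ : IsSpinConfig σ)
    (hsat : 0 ≤ J i j * σ i * σ j) :
    ∀ a ∈ ({i, j} : Set (Fin N)), Ham J σ ≤ Ham J (Function.update σ a (-σ a)) := by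
  have hsymm : IsBullyBond (fun a b => |J a b|) j i := h.symm fun a b => by rw [hsym a b]
  have hsat' : 0 ≤ J j i * σ j * σ i := by
    rwa [hsym j i, mul_right_comm]
  rintro a (rfl | rfl)
  · exact Ham_le_Ham_update_neg_of_mul_localField_nonneg (hsym a) (h.mul_localField_nonneg hσ hsat)
  · exact Ham_le_Ham_update_neg_of_mul_localField_nonneg (hsym a)
      (hsymm.mul_localField_nonneg hσ hsat')

end Hamiltonian

theorem two_disjoint_bully_bonds_give_nontrivial_local_min_general (N : ℕ)
    (J : Fin N → Fin N → ℝ) (hsym : ∀ i j, J i j = J j i) (i j k l : Fin N)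
    (hb1 : IsBullyBond (fun a b => |J a b|) i j) (hb2 : IsBullyBond (fun a b => |J a b|) k l)
    (hdisj : ({i, j} : Set (Fin N)) ∩ {k, l} = ∅) :
    ∃ σ : Fin N → ℤ, IsNontrivialLocalMin J σ := by
  obtain ⟨τ, hτ, hτi, hτk, hsat1, hsat2⟩ := exists_isSpinConfig_satisfying_bonds J hb1.1 hb2.1
    (Set.disjoint_iff_inter_eq_empty.2 hdisj)
  obtain ⟨σ, hσ, hστ, hmin⟩ :
      ∃ σ, IsSpinConfig σ ∧ Set.EqOn σ τ ({i, j} ∪ {k, l}) ∧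
        ∀ a, Ham J σ ≤ Ham J (Function.update σ a (-σ a)) := by
    refine exists_isSpinConfig_eqOn_forall_le_update_neg (Ham J) _ hτ ?_
    rintro σ hσ hστ a (ha | ha)
    · refine hb1.Ham_le_Ham_update_neg hsym hσ ?_ a ha
      rwa [hστ (by simp : i ∈ _), hστ (by simp : j ∈ _)]
    · refine hb2.Ham_le_Ham_update_neg hsym hσ ?_ a ha
      rwa [hστ (by simp : k ∈ _), hστ (by simp : l ∈ _)]
  have hσi : σ i = 1 := (hστ (by simp)).trans hτi
  have hσk : σ k = -1 := (hστ (by simp)).trans hτk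
  exact ⟨σ, hσ, fun h => by simp [h] at hσk, fun h => by simp [h] at hσi, hmin⟩

/-- two vertex-disjoint bully bonds force the existence of a nontrivial local
minimum of the Hamiltonian on the hypercube. -/
theorem two_disjoint_bully_bonds_give_nontrivial_local_min (N : ℕ) (J : Fin N → Fin N → ℝ)
    (hsym : ∀ i j, J i j = J j i) (hnonneg : ∀ i j, 0 ≤ J i j)
    (i j k l : Fin N) (hb1 : IsBullyBond J i j) (hb2 : IsBullyBond J k l)
    (hdisj : ({i, j} : Set (Fin N)) ∩ {k, l} = ∅) :
    ∃ σ : Fin N → ℤ, IsNontrivialLocalMin J σ := by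
  have habs : (fun a b => |J a b|) = J := funext₂ fun a b => abs_of_nonneg (hnonneg a b)
  exact two_disjoint_bully_bonds_give_nontrivial_local_min_general N J hsym i j k l
    (habs.symm ▸ hb1) (habs.symm ▸ hb2) hdisj
end

section
/- Let {J_{ij}} be i.i.d. nonnegative random variables with P(J_{12} ≥ x) = x^{−α} L(x) for some 0 < α < 1 and slowly varying L. Then with probability tending to 1 as N → ∞, the pair (i,j) with 1 ≤ i < j ≤ ⌊N/2⌋ maximizing J_{ij} is a bully bond; in particular, with probability tending to 1 there exists at least one bully bond with both endpoints in {1,...,⌊N/2⌋}. -/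
open MeasureTheory ProbabilityTheory Filter Finset

/-- Index set for the couplings: unordered pairs `{i,j}` with `i < j`, encoded as ordered pairs. -/
abbrev CoupIdx (N : ℕ) := {q : Fin N × Fin N // q.1 < q.2}

/-- The symmetric coupling matrix built from couplings indexed by pairs `i < j`. -/
noncomputable def JofReal {N : ℕ} (w : CoupIdx N → ℝ) (i j : Fin N) : ℝ :=
  if h : i < j then w ⟨(i, j), h⟩ else if h' : j < i then w ⟨(j, i), h'⟩ else 0

/-!
Put `F t = ν [t, ∞)`. Since `F` loses at most a factor `q > 1 / 2` when `t` doubles, a dyadic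
version of Karamata's theorem bounds the truncated mean `∫ max(min(x, t), 0) dν` by `C t F t`. If a
sum of at most `N` couplings reaches `t`, then so does the sum of the couplings truncated to
`[0, t]`; hence, by independence and Markov's inequality, a given coupling reaches `t` without
exceeding the sum of the other couplings at each of its endpoints with probability at most
`2 C N (F t)²`.

For a set of `m` bonds with `r = m / N → ∞`, choose `t` with `F t` of order `log r / m`. Some bond
of the set reaches `t` with probability at least `1 - exp (-m F t) → 1`, while all bonds of the set
reaching `t` are bully bonds up to an event of probability `2 C m N (F t)² = O((log r)² / r) → 0`.
-/

section Doubling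

lemma forall_ge_of_doubling {p : ℝ → Prop} {t₀ : ℝ} (ht₀ : 0 < t₀)
    (base : ∀ t ∈ Set.Icc t₀ (2 * t₀), p t) (step : ∀ t, t₀ ≤ t → p t → p (2 * t)) :
    ∀ t, t₀ ≤ t → p t := by
  have dyadic : ∀ (n : ℕ) (t : ℝ), t₀ ≤ t → t ≤ 2 ^ n * (2 * t₀) → p t := by
    intro n
    induction n with
    | zero => exact fun t ht htn => base t ⟨ht, by simpa using htn⟩
    | succ n ih =>
      intro t ht htn
      rcases le_total t (2 * t₀) with hsmall | hlarge
      · exact base t ⟨ht, hsmall⟩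
      · have hhalf : p (t / 2) := ih _ (by linarith) (by rw [pow_succ] at htn; linarith)
        simpa [mul_div_cancel₀] using step _ (by linarith) hhalf
  intro t ht
  obtain ⟨n, hn⟩ := pow_unbounded_of_one_lt (t / (2 * t₀)) one_lt_two
  exact dyadic n t ht ((div_le_iff₀ (by positivity)).1 hn.le)

lemma eventually_exists_mem_Icc_of_doubling {g : ℝ → ℝ} {q : ℝ} (hq : 0 ≤ q)
    (hg : Tendsto g atTop (nhds 0)) (hpos : ∀ x, 0 < g x)
    (hdoub : ∀ᶠ x in atTop, q * g x ≤ g (2 * x)) {p : ℝ → Prop} (hp : ∀ᶠ x in atTop, p x) :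
    ∀ᶠ a in nhdsWithin (0 : ℝ) (Set.Ioi 0), ∃ x, p x ∧ g x ∈ Set.Icc (q * a) a := by
  classical
  obtain ⟨t₀, ht₀⟩ := eventually_atTop.1 (hdoub.and (hp.and (eventually_gt_atTop 0)))
  have ht₀pos : 0 < t₀ := (ht₀ t₀ le_rfl).2.2
  have hle : ∀ n : ℕ, t₀ ≤ t₀ * 2 ^ n := fun n =>
    le_mul_of_one_le_right ht₀pos.le (one_le_pow₀ one_le_two)
  have hlevels : Tendsto (fun n : ℕ => g (t₀ * 2 ^ n)) atTop (nhds 0) :=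
    hg.comp ((tendsto_pow_atTop_atTop_of_one_lt one_lt_two).const_mul_atTop ht₀pos)
  filter_upwards [Ioo_mem_nhdsGT (hpos t₀)] with a ha
  have hex : ∃ n : ℕ, g (t₀ * 2 ^ n) ≤ a := (hlevels.eventually_le_const ha.1).exists
  obtain ⟨n, hn⟩ : ∃ n, Nat.find hex = n + 1 := by
    refine Nat.exists_eq_succ_of_ne_zero fun h => ?_
    have hzero := Nat.find_spec hex
    rw [h, pow_zero, mul_one] at hzero
    exact hzero.not_gt ha.2
  have hbefore : a < g (t₀ * 2 ^ n) := not_le.1 (Nat.find_min hex (by omega))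
  have hafter : g (t₀ * 2 ^ (n + 1)) ≤ a := hn ▸ Nat.find_spec hex
  refine ⟨t₀ * 2 ^ (n + 1), (ht₀ _ (hle _)).2.1, ?_, hafter⟩
  calc q * a ≤ q * g (t₀ * 2 ^ n) := by gcongr
    _ ≤ g (2 * (t₀ * 2 ^ n)) := (ht₀ _ (hle n)).1
    _ = g (t₀ * 2 ^ (n + 1)) := by rw [pow_succ]; ring_nf

lemma tendsto_div_of_slowlyVarying {F L : ℝ → ℝ} {α a : ℝ} (ha : 0 < a)
    (hL : Tendsto (fun x => L (a * x) / L x) atTop (nhds 1))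
    (hF : ∀ x, 0 < x → F x = x ^ (-α) * L x) :
    Tendsto (fun x => F (a * x) / F x) atTop (nhds (a ^ (-α))) := by
  have hlim : Tendsto (fun x => a ^ (-α) * (L (a * x) / L x)) atTop (nhds (a ^ (-α))) := by
    simpa using hL.const_mul (a ^ (-α))
  refine hlim.congr' ?_
  filter_upwards [eventually_gt_atTop 0] with x hx
  rw [hF _ (mul_pos ha hx), hF x hx, Real.mul_rpow ha.le hx.le]
  field_simp

end Doubling

section Tail

variable {ν : Measure ℝ}

lemma tendsto_measureReal_Ici_atTop (ν : Measure ℝ) [IsFiniteMeasure ν] :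
    Tendsto (fun x => ν.real (Set.Ici x)) atTop (nhds 0) := by
  have hempty : ⋂ x : ℝ, Set.Ici x = ∅ :=
    Set.eq_empty_iff_forall_notMem.2 fun y hy =>
      (lt_add_one y).not_ge (Set.mem_iInter.1 hy (y + 1))
  have hlim : Tendsto (ν ∘ Set.Ici) atTop (nhds 0) := by
    simpa only [hempty, measure_empty] using
      tendsto_measure_iInter_atTop (μ := ν) (fun _ => measurableSet_Ici.nullMeasurableSet)
        antitone_Ici ⟨0, measure_ne_top _ _⟩
  exact (ENNReal.tendsto_toReal ENNReal.zero_ne_top).comp hlim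

lemma measureReal_Ici_pos_of_doubling [IsFiniteMeasure ν] {q : ℝ} (hq : 0 ≤ q)
    (hν : ∀ᶠ x in atTop, q * ν.real (Set.Ici x) < ν.real (Set.Ici (2 * x))) (x : ℝ) :
    0 < ν.real (Set.Ici x) := by
  obtain ⟨y, hy, hxy, hy₀⟩ :=
    (hν.and ((eventually_ge_atTop x).and (eventually_ge_atTop 0))).exists
  calc 0 ≤ q * ν.real (Set.Ici y) := by positivity
    _ < ν.real (Set.Ici (2 * y)) := hy
    _ ≤ ν.real (Set.Ici x) := measureReal_mono (Set.Ici_subset_Ici.2 (by linarith))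

lemma exists_doubling_of_slowlyVarying {α : ℝ} (hα : α < 1) {L : ℝ → ℝ}
    (hL : Tendsto (fun x => L (2 * x) / L x) atTop (nhds 1))
    (hν : ∀ x, 0 < x → ν.real (Set.Ici x) = x ^ (-α) * L x) :
    ∃ q : ℝ, 1 / 2 < q ∧
      ∀ᶠ x in atTop, q * ν.real (Set.Ici x) < ν.real (Set.Ici (2 * x)) := by
  have hhalf : (1 / 2 : ℝ) < 2 ^ (-α) := by
    rw [one_div, ← Real.rpow_neg_one]
    exact Real.rpow_lt_rpow_of_exponent_lt one_lt_two (by linarith)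
  obtain ⟨q, hq, hqα⟩ := exists_between hhalf
  refine ⟨q, hq, ?_⟩
  filter_upwards [(tendsto_div_of_slowlyVarying two_pos hL hν).eventually_const_lt hqα] with x hx
  -- A vanishing tail would make the ratio `0` by the convention `y / 0 = 0`, contradicting `q < ·`.
  have hne : ν.real (Set.Ici x) ≠ 0 := fun h => by
    rw [h, div_zero] at hx
    linarith
  exact (lt_div_iff₀ (measureReal_nonneg.lt_of_ne' hne)).1 hx

/-- The truncated mean `E[max(min(X, t), 0)]` of a variable `X` with law `ν`. It is an extended
nonnegative real, `ENNReal.ofReal` taking the positive part. -/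
noncomputable def truncMean (ν : Measure ℝ) (t : ℝ) : ENNReal :=
  ∫⁻ x, ENNReal.ofReal (min x t) ∂ν

lemma truncMean_le [IsProbabilityMeasure ν] (t : ℝ) : truncMean ν t ≤ ENNReal.ofReal t := by
  calc truncMean ν t ≤ ∫⁻ _, ENNReal.ofReal t ∂ν :=
        lintegral_mono fun x => ENNReal.ofReal_le_ofReal (min_le_right _ _)
    _ = ENNReal.ofReal t := by simp

lemma truncMean_le_add_mul_measure_Ici (s t : ℝ) :
    truncMean ν s ≤ truncMean ν t + ENNReal.ofReal (s - t) * ν (Set.Ici t) := by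
  rw [truncMean, truncMean, ← lintegral_indicator_const measurableSet_Ici,
    ← lintegral_add_left (by fun_prop)]
  refine lintegral_mono fun x => ?_
  rcases le_or_gt t x with hx | hx
  · rw [Set.indicator_of_mem (Set.mem_Ici.2 hx), min_eq_right hx]
    calc ENNReal.ofReal (min x s) ≤ ENNReal.ofReal (t + (s - t)) :=
          ENNReal.ofReal_le_ofReal (by simp)
      _ ≤ ENNReal.ofReal t + ENNReal.ofReal (s - t) := ENNReal.ofReal_add_le
  · rw [min_eq_left hx.le]
    exact (ENNReal.ofReal_le_ofReal (min_le_left _ _)).trans le_self_add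

lemma truncMean_two_mul_le [IsFiniteMeasure ν] {C q t : ℝ} (hC : 0 ≤ C)
    (hCq : 1 ≤ C * (2 * q - 1)) (ht : 0 ≤ t)
    (hν : q * ν.real (Set.Ici t) ≤ ν.real (Set.Ici (2 * t)))
    (hmean : truncMean ν t ≤ ENNReal.ofReal (C * t * ν.real (Set.Ici t))) :
    truncMean ν (2 * t) ≤ ENNReal.ofReal (C * (2 * t) * ν.real (Set.Ici (2 * t))) := by
  have htail : (C + 1) * t * ν.real (Set.Ici t) ≤ C * (2 * t) * ν.real (Set.Ici (2 * t)) :=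
    calc (C + 1) * t * ν.real (Set.Ici t) ≤ (C * (2 * q)) * t * ν.real (Set.Ici t) := by
          gcongr; linarith
      _ = C * (2 * t) * (q * ν.real (Set.Ici t)) := by ring
      _ ≤ C * (2 * t) * ν.real (Set.Ici (2 * t)) := by gcongr
  calc truncMean ν (2 * t)
      ≤ truncMean ν t + ENNReal.ofReal t * ν (Set.Ici t) := by
        simpa only [two_mul, add_sub_cancel_right] using
          truncMean_le_add_mul_measure_Ici (ν := ν) (2 * t) t
    _ ≤ ENNReal.ofReal (C * t * ν.real (Set.Ici t)) + ENNReal.ofReal (t * ν.real (Set.Ici t)) := by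
        rw [ENNReal.ofReal_mul ht, ofReal_measureReal]
        gcongr
    _ = ENNReal.ofReal ((C + 1) * t * ν.real (Set.Ici t)) := by
        rw [← ENNReal.ofReal_add (by positivity) (by positivity)]
        ring_nf
    _ ≤ ENNReal.ofReal (C * (2 * t) * ν.real (Set.Ici (2 * t))) := ENNReal.ofReal_le_ofReal htail

lemma exists_eventually_truncMean_le [IsProbabilityMeasure ν] {q : ℝ} (hq : 1 / 2 < q)
    (hν : ∀ᶠ x in atTop, q * ν.real (Set.Ici x) < ν.real (Set.Ici (2 * x))) :
    ∃ C : ℝ, 0 ≤ C ∧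
      ∀ᶠ t in atTop, truncMean ν t ≤ ENNReal.ofReal (C * t * ν.real (Set.Ici t)) := by
  obtain ⟨t₀, ht₀⟩ := eventually_atTop.1 (hν.and (eventually_gt_atTop 0))
  have ht₀pos : 0 < t₀ := (ht₀ t₀ le_rfl).2
  have hpos : 0 < ν.real (Set.Ici (2 * t₀)) := measureReal_Ici_pos_of_doubling (by linarith) hν _
  obtain ⟨C, hCpos, hCtail, hCq⟩ : ∃ C : ℝ, 0 ≤ C ∧ 1 ≤ C * ν.real (Set.Ici (2 * t₀)) ∧
      1 ≤ C * (2 * q - 1) := by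
    have hq' : 0 < 2 * q - 1 := by linarith
    refine ⟨max (ν.real (Set.Ici (2 * t₀)))⁻¹ (2 * q - 1)⁻¹, by positivity, ?_, ?_⟩
    · exact (inv_le_iff_one_le_mul₀ hpos).1 (le_max_left _ _)
    · exact (inv_le_iff_one_le_mul₀ hq').1 (le_max_right _ _)
  refine ⟨C, hCpos, eventually_atTop.2 ⟨t₀, forall_ge_of_doubling ht₀pos ?_ ?_⟩⟩
  · rintro t ⟨ht, ht'⟩
    refine (truncMean_le t).trans (ENNReal.ofReal_le_ofReal ?_)
    have ht_nonneg : 0 ≤ t := ht₀pos.le.trans ht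
    calc t ≤ t * (C * ν.real (Set.Ici (2 * t₀))) := le_mul_of_one_le_right ht_nonneg hCtail
      _ = C * t * ν.real (Set.Ici (2 * t₀)) := by ring
      _ ≤ C * t * ν.real (Set.Ici t) := by
        gcongr
        exact measure_ne_top _ _
  · exact fun t ht => truncMean_two_mul_le hCpos hCq (ht₀ t ht).2.le (ht₀ t ht).1.le

end Tail

section Probability

lemma tendsto_measure_one_of_tendsto_measure_compl {κ : Type*} {l : Filter κ} {Ω : κ → Type*}
    [∀ i, MeasurableSpace (Ω i)] {μ : ∀ i, Measure (Ω i)} [∀ i, IsProbabilityMeasure (μ i)]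
    {A : ∀ i, Set (Ω i)} (h : Tendsto (fun i => μ i (A i)ᶜ) l (nhds 0)) :
    Tendsto (fun i => μ i (A i)) l (nhds 1) := by
  have hlower : Tendsto (fun i => 1 - μ i (A i)ᶜ) l (nhds 1) := by
    simpa using ENNReal.Tendsto.sub tendsto_const_nhds h (Or.inl ENNReal.one_ne_top)
  refine tendsto_of_tendsto_of_tendsto_of_le_of_le hlower tendsto_const_nhds (fun i => ?_)
    fun i => prob_le_one
  calc 1 - μ i (A i)ᶜ = μ i (A i ∪ (A i)ᶜ) - μ i (A i)ᶜ := by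
        rw [Set.union_compl_self, measure_univ]
    _ ≤ μ i (A i) := tsub_le_iff_right.2 (measure_union_le _ _)

lemma ofReal_le_sum_ofReal_min {κ : Type*} {s : Finset κ} {f : κ → ℝ} {t : ℝ}
    (h : t ≤ ∑ k ∈ s, f k) :
    ENNReal.ofReal t ≤ ∑ k ∈ s, ENNReal.ofReal (min (f k) t) := by
  by_cases hbig : ∃ k ∈ s, t ≤ f k
  · obtain ⟨k, hk, hkt⟩ := hbig
    calc ENNReal.ofReal t = ENNReal.ofReal (min (f k) t) := by rw [min_eq_right hkt]
      _ ≤ ∑ k ∈ s, ENNReal.ofReal (min (f k) t) :=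
        Finset.single_le_sum (f := fun k => ENNReal.ofReal (min (f k) t)) (by simp) hk
  · push Not at hbig
    calc ENNReal.ofReal t ≤ ENNReal.ofReal (∑ k ∈ s, f k) := ENNReal.ofReal_le_ofReal h
      _ ≤ ∑ k ∈ s, ENNReal.ofReal (f k) :=
        Finset.le_sum_of_subadditive ENNReal.ofReal ENNReal.ofReal_zero.le
          (fun _ _ => ENNReal.ofReal_add_le) s f
      _ = ∑ k ∈ s, ENNReal.ofReal (min (f k) t) :=
        Finset.sum_congr rfl fun k hk => by rw [min_eq_left (hbig k hk).le]

lemma ofReal_mul_measure_le_and_le_sum_le {Ω κ : Type*} [MeasurableSpace Ω] {μ : Measure Ω}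
    {X : Ω → ℝ} {Y : κ → Ω → ℝ} {s : Finset κ} (hX : AEMeasurable X μ)
    (hY : ∀ k ∈ s, AEMeasurable (Y k) μ) (hXY : ∀ k ∈ s, IndepFun X (Y k) μ) (t : ℝ) :
    ENNReal.ofReal t * μ {ω | t ≤ X ω ∧ X ω ≤ ∑ k ∈ s, Y k ω} ≤
      μ {ω | t ≤ X ω} * ∑ k ∈ s, ∫⁻ ω, ENNReal.ofReal (min (Y k ω) t) ∂μ := by
  let u : ℝ → ENNReal := (Set.Ici t).indicator 1
  let v : ℝ → ENNReal := fun y => ENNReal.ofReal (min y t)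
  have hu : Measurable u := measurable_one.indicator measurableSet_Ici
  have hv : Measurable v := by fun_prop
  have hprod : ∀ k ∈ s, ∫⁻ ω, u (X ω) * v (Y k ω) ∂μ = μ {ω | t ≤ X ω} * ∫⁻ ω, v (Y k ω) ∂μ := by
    intro k hk
    have hmul : ∫⁻ ω, u (X ω) * v (Y k ω) ∂μ = (∫⁻ ω, u (X ω) ∂μ) * ∫⁻ ω, v (Y k ω) ∂μ :=
      lintegral_mul_eq_lintegral_mul_lintegral_of_indepFun'' (hu.comp_aemeasurable hX)
        (hv.comp_aemeasurable (hY k hk)) ((hXY k hk).comp hu hv)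
    rw [hmul]
    congr 1
    exact lintegral_indicator_one₀ (hX.nullMeasurableSet_preimage measurableSet_Ici)
  have hmeas : ∀ k ∈ s, AEMeasurable (fun ω => u (X ω) * v (Y k ω)) μ := fun k hk =>
    (hu.comp_aemeasurable hX).mul (hv.comp_aemeasurable (hY k hk))
  calc ENNReal.ofReal t * μ {ω | t ≤ X ω ∧ X ω ≤ ∑ k ∈ s, Y k ω}
      ≤ ENNReal.ofReal t * μ {ω | ENNReal.ofReal t ≤ ∑ k ∈ s, u (X ω) * v (Y k ω)} := by
        gcongr with ω
        rintro ⟨htX, hXsum⟩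
        have huX : u (X ω) = 1 := Set.indicator_of_mem (Set.mem_Ici.2 htX) _
        simpa only [huX, one_mul] using ofReal_le_sum_ofReal_min (htX.trans hXsum)
    _ ≤ ∫⁻ ω, ∑ k ∈ s, u (X ω) * v (Y k ω) ∂μ :=
        mul_meas_ge_le_lintegral₀ (Finset.aemeasurable_fun_sum s hmeas) _
    _ = μ {ω | t ≤ X ω} * ∑ k ∈ s, ∫⁻ ω, v (Y k ω) ∂μ := by
        rw [lintegral_finsetSum' _ hmeas, Finset.sum_congr rfl hprod, Finset.mul_sum]

lemma measure_le_and_le_sum_le_of_hasLaw {Ω κ : Type*} [MeasurableSpace Ω] {μ : Measure Ω}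
    {ν : Measure ℝ} [IsFiniteMeasure ν] {X : Ω → ℝ} {Y : κ → Ω → ℝ} {s : Finset κ}
    (hX : HasLaw X ν μ) (hY : ∀ k ∈ s, HasLaw (Y k) ν μ) (hXY : ∀ k ∈ s, IndepFun X (Y k) μ)
    {C t : ℝ} (ht : 0 < t)
    (hmean : truncMean ν t ≤ ENNReal.ofReal (C * t * ν.real (Set.Ici t))) :
    μ {ω | t ≤ X ω ∧ X ω ≤ ∑ k ∈ s, Y k ω} ≤
      ENNReal.ofReal (C * #s * ν.real (Set.Ici t) ^ 2) := by
  have htail : μ {ω | t ≤ X ω} = ENNReal.ofReal (ν.real (Set.Ici t)) := by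
    rw [ofReal_measureReal]
    exact hX.measure_eq measurableSet_Ici
  have hsum : ∑ k ∈ s, ∫⁻ ω, ENNReal.ofReal (min (Y k ω) t) ∂μ = #s * truncMean ν t := by
    rw [← nsmul_eq_mul, ← Finset.sum_const]
    exact Finset.sum_congr rfl fun k hk =>
      (hY k hk).lintegral_comp (f := fun y => ENNReal.ofReal (min y t)) (by fun_prop)
  rw [← ENNReal.mul_le_mul_iff_right (ENNReal.ofReal_pos.2 ht).ne' ENNReal.ofReal_ne_top]
  calc ENNReal.ofReal t * μ {ω | t ≤ X ω ∧ X ω ≤ ∑ k ∈ s, Y k ω}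
      ≤ μ {ω | t ≤ X ω} * ∑ k ∈ s, ∫⁻ ω, ENNReal.ofReal (min (Y k ω) t) ∂μ :=
        ofReal_mul_measure_le_and_le_sum_le hX.aemeasurable (fun k hk => (hY k hk).aemeasurable)
          hXY t
    _ ≤ ENNReal.ofReal (ν.real (Set.Ici t)) *
          (#s * ENNReal.ofReal (C * t * ν.real (Set.Ici t))) := by
        rw [htail, hsum]
        gcongr
    _ = ENNReal.ofReal t * ENNReal.ofReal (C * #s * ν.real (Set.Ici t) ^ 2) := by
        rw [← ENNReal.ofReal_natCast, ← ENNReal.ofReal_mul (by positivity),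
          ← ENNReal.ofReal_mul measureReal_nonneg, ← ENNReal.ofReal_mul ht.le]
        ring_nf

lemma pi_forall_mem_lt_le {ι : Type*} [Fintype ι] (ν : Measure ℝ) [IsProbabilityMeasure ν]
    (S : Finset ι) (t : ℝ) :
    (Measure.pi fun _ : ι => ν) {w | ∀ b ∈ S, w b < t} ≤
      ENNReal.ofReal (Real.exp (-(ν.real (Set.Ici t) * #S))) := by
  have hle : ν.real (Set.Ici t) ≤ 1 := measureReal_le_one
  have hIio : ν (Set.Iio t) = ENNReal.ofReal (1 - ν.real (Set.Ici t)) := by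
    rw [← ofReal_measureReal, ← Set.compl_Ici, probReal_compl_eq_one_sub measurableSet_Ici]
  calc (Measure.pi fun _ : ι => ν) {w | ∀ b ∈ S, w b < t}
      = ν (Set.Iio t) ^ #S := by
        rw [← Finset.prod_const]
        exact Measure.pi_pi_finset (μ := fun _ : ι => ν) (fun _ => Set.Iio t) S
    _ = ENNReal.ofReal ((1 - ν.real (Set.Ici t)) ^ #S) := by
        rw [hIio, ENNReal.ofReal_pow (by linarith)]
    _ ≤ ENNReal.ofReal (Real.exp (-ν.real (Set.Ici t)) ^ #S) :=
        ENNReal.ofReal_le_ofReal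
          (pow_le_pow_left₀ (by linarith) (Real.one_sub_le_exp_neg _) _)
    _ = ENNReal.ofReal (Real.exp (-(ν.real (Set.Ici t) * #S))) := by
        rw [← Real.exp_nat_mul]
        ring_nf

end Probability

section BullyBonds

variable {N : ℕ}

lemma exists_JofReal_eq_apply {i j : Fin N} (hij : i ≠ j) :
    ∃ b : CoupIdx N, s(b.1.1, b.1.2) = s(i, j) ∧ ∀ w : CoupIdx N → ℝ, JofReal w i j = w b := by
  rcases hij.lt_or_gt with h | h
  · exact ⟨⟨(i, j), h⟩, rfl, fun w => dif_pos h⟩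
  · exact ⟨⟨(j, i), h⟩, Sym2.eq_swap, fun w => by rw [JofReal, dif_neg h.not_gt, dif_pos h]⟩

lemma JofReal_apply (w : CoupIdx N → ℝ) (b : CoupIdx N) : JofReal w b.1.1 b.1.2 = w b :=
  dif_pos b.2

lemma hasLaw_JofReal (ν : Measure ℝ) [IsProbabilityMeasure ν] {i j : Fin N} (hij : i ≠ j) :
    HasLaw (fun w => JofReal w i j) ν (Measure.pi fun _ : CoupIdx N => ν) := by
  obtain ⟨b, -, hb⟩ := exists_JofReal_eq_apply hij
  simp only [hb]
  exact (measurePreserving_eval (fun _ : CoupIdx N => ν) b).hasLaw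

lemma indepFun_JofReal (ν : Measure ℝ) [IsProbabilityMeasure ν] {i j k l : Fin N} (hij : i ≠ j)
    (hkl : k ≠ l) (hne : s(i, j) ≠ s(k, l)) :
    IndepFun (fun w => JofReal w i j) (fun w => JofReal w k l)
      (Measure.pi fun _ : CoupIdx N => ν) := by
  obtain ⟨b, hb, hJb⟩ := exists_JofReal_eq_apply hij
  obtain ⟨c, hc, hJc⟩ := exists_JofReal_eq_apply hkl
  simp only [hJb, hJc]
  have hbc : b ≠ c := fun h => hne (by rw [← hb, ← hc, h])
  exact (iIndepFun_pi (X := fun _ : CoupIdx N => (id : ℝ → ℝ)) fun _ => aemeasurable_id)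
    |>.indepFun hbc

lemma not_isBullyBond_iff {J : Fin N → Fin N → ℝ} {i j : Fin N} (hij : i ≠ j) :
    ¬ IsBullyBond J i j ↔ ∃ x ∈ ({i, j} : Finset (Fin N)),
      J i j ≤ ∑ k ∈ (Finset.univ.erase i).erase j, J x k := by
  simp only [IsBullyBond, ne_eq, hij, not_false_eq_true, true_and, not_lt, le_max_iff,
    Finset.mem_insert, Finset.mem_singleton, exists_eq_or_imp, exists_eq_left]

lemma pi_le_and_le_sum_le (ν : Measure ℝ) [IsProbabilityMeasure ν] {C t : ℝ} (hC : 0 ≤ C)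
    (ht : 0 < t) (hmean : truncMean ν t ≤ ENNReal.ofReal (C * t * ν.real (Set.Ici t)))
    {i j x : Fin N} (hij : i ≠ j) (hx : x ∈ ({i, j} : Finset (Fin N))) :
    (Measure.pi fun _ : CoupIdx N => ν)
        {w | t ≤ JofReal w i j ∧
          JofReal w i j ≤ ∑ k ∈ (Finset.univ.erase i).erase j, JofReal w x k} ≤
      ENNReal.ofReal (C * N * ν.real (Set.Ici t) ^ 2) := by
  set s := (Finset.univ.erase i).erase j
  have hxk : ∀ k ∈ s, x ≠ k ∧ s(i, j) ≠ s(x, k) := by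
    intro k hk
    simp only [s, Finset.mem_erase, Finset.mem_univ, and_true] at hk
    simp only [Finset.mem_insert, Finset.mem_singleton] at hx
    rcases hx with rfl | rfl <;> simp only [ne_eq, Sym2.eq_iff] <;> tauto
  have hcard : #s ≤ N := by simpa using Finset.card_le_univ s
  calc _ ≤ ENNReal.ofReal (C * #s * ν.real (Set.Ici t) ^ 2) :=
        measure_le_and_le_sum_le_of_hasLaw (hasLaw_JofReal ν hij)
          (fun k hk => hasLaw_JofReal ν (hxk k hk).1)
          (fun k hk => indepFun_JofReal ν hij (hxk k hk).1 (hxk k hk).2) ht hmean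
    _ ≤ ENNReal.ofReal (C * N * ν.real (Set.Ici t) ^ 2) := by gcongr

lemma pi_le_and_not_isBullyBond_le (ν : Measure ℝ) [IsProbabilityMeasure ν] {C t : ℝ}
    (hC : 0 ≤ C) (ht : 0 < t)
    (hmean : truncMean ν t ≤ ENNReal.ofReal (C * t * ν.real (Set.Ici t)))
    {i j : Fin N} (hij : i ≠ j) :
    (Measure.pi fun _ : CoupIdx N => ν) {w | t ≤ JofReal w i j ∧ ¬ IsBullyBond (JofReal w) i j} ≤
      ENNReal.ofReal (2 * C * N * ν.real (Set.Ici t) ^ 2) := by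
  have hunion : {w : CoupIdx N → ℝ | t ≤ JofReal w i j ∧ ¬ IsBullyBond (JofReal w) i j} =
      ⋃ x ∈ ({i, j} : Finset (Fin N)), {w | t ≤ JofReal w i j ∧
        JofReal w i j ≤ ∑ k ∈ (Finset.univ.erase i).erase j, JofReal w x k} := by
    ext w
    simp only [not_isBullyBond_iff hij, Set.mem_ofPred_eq, Set.mem_iUnion, exists_prop]
    tauto
  rw [hunion]
  calc _ ≤ ∑ _x ∈ ({i, j} : Finset (Fin N)), ENNReal.ofReal (C * N * ν.real (Set.Ici t) ^ 2) :=
        (measure_biUnion_finset_le _ _).trans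
          (Finset.sum_le_sum fun x hx => pi_le_and_le_sum_le ν hC ht hmean hij hx)
    _ = ENNReal.ofReal (2 * C * N * ν.real (Set.Ici t) ^ 2) := by
        rw [Finset.sum_const, Finset.card_pair hij, ← ENNReal.ofReal_nsmul]
        ring_nf

/-- The couplings `J` attain their maximum over the set `S` of bonds only at bully bonds, and `S`
contains a bully bond. The second clause matters only for empty `S`, where the first one is
vacuous. -/
def MaximaAreBullyBonds (J : Fin N → Fin N → ℝ) (S : Finset (CoupIdx N)) : Prop :=
  (∀ b ∈ S, (∀ c ∈ S, J c.1.1 c.1.2 ≤ J b.1.1 b.1.2) → IsBullyBond J b.1.1 b.1.2) ∧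
    ∃ b ∈ S, IsBullyBond J b.1.1 b.1.2

lemma maximaAreBullyBonds_of_threshold {J : Fin N → Fin N → ℝ} {S : Finset (CoupIdx N)} {t : ℝ}
    (hbig : ∃ b ∈ S, t ≤ J b.1.1 b.1.2)
    (hbully : ∀ b ∈ S, t ≤ J b.1.1 b.1.2 → IsBullyBond J b.1.1 b.1.2) :
    MaximaAreBullyBonds J S := by
  obtain ⟨b₀, hb₀, ht⟩ := hbig
  exact ⟨fun b hb hmax => hbully b hb (ht.trans (hmax b₀ hb₀)), b₀, hb₀, hbully b₀ hb₀ ht⟩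

lemma pi_not_maximaAreBullyBonds_le (ν : Measure ℝ) [IsProbabilityMeasure ν] {C t : ℝ}
    (hC : 0 ≤ C) (ht : 0 < t)
    (hmean : truncMean ν t ≤ ENNReal.ofReal (C * t * ν.real (Set.Ici t)))
    (S : Finset (CoupIdx N)) :
    (Measure.pi fun _ : CoupIdx N => ν) {w | ¬ MaximaAreBullyBonds (JofReal w) S} ≤
      ENNReal.ofReal (Real.exp (-(ν.real (Set.Ici t) * #S)) +
        2 * C * N * #S * ν.real (Set.Ici t) ^ 2) := by
  set μ := Measure.pi fun _ : CoupIdx N => ν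
  let bad (b : CoupIdx N) : Set (CoupIdx N → ℝ) :=
    {w | t ≤ JofReal w b.1.1 b.1.2 ∧ ¬ IsBullyBond (JofReal w) b.1.1 b.1.2}
  have hcover : {w | ¬ MaximaAreBullyBonds (JofReal w) S} ⊆
      {w | ∀ b ∈ S, w b < t} ∪ ⋃ b ∈ S, bad b := by
    intro w hw
    by_contra hgood
    simp only [bad, Set.mem_union, Set.mem_ofPred_eq, Set.mem_iUnion, not_or, not_exists, not_and,
      not_forall, not_lt, not_not, exists_prop] at hgood
    exact hw (maximaAreBullyBonds_of_threshold (by simpa only [JofReal_apply] using hgood.1)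
      hgood.2)
  have hbad : μ (⋃ b ∈ S, bad b) ≤
      ENNReal.ofReal (2 * C * N * #S * ν.real (Set.Ici t) ^ 2) :=
    calc μ (⋃ b ∈ S, bad b)
        ≤ ∑ _b ∈ S, ENNReal.ofReal (2 * C * N * ν.real (Set.Ici t) ^ 2) :=
          (measure_biUnion_finset_le _ _).trans
            (Finset.sum_le_sum fun b _ => pi_le_and_not_isBullyBond_le ν hC ht hmean b.2.ne)
      _ = ENNReal.ofReal (2 * C * N * #S * ν.real (Set.Ici t) ^ 2) := by
          rw [Finset.sum_const, ← ENNReal.ofReal_nsmul, nsmul_eq_mul]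
          ring_nf
  rw [ENNReal.ofReal_add (by positivity) (by positivity)]
  exact (measure_mono hcover).trans ((measure_union_le _ _).trans
    (add_le_add (pi_forall_mem_lt_le ν S t) hbad))

end BullyBonds

section Asymptotics

lemma exp_neg_mul_add_mul_sq_le {C q p a m n : ℝ} (hC : 0 ≤ C) (hm : 0 < m) (hn : 0 < n)
    (hq : 0 ≤ q) (ha : 0 ≤ a) (hp : p ∈ Set.Icc (q * (a / m)) (a / m)) :
    Real.exp (-(p * m)) + 2 * C * n * m * p ^ 2 ≤
      Real.exp (-(q * a)) + 2 * C * (a ^ 2 / (m / n)) := by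
  have hp_nonneg : 0 ≤ p := le_trans (by positivity) hp.1
  gcongr ?_ + ?_
  · rw [Real.exp_le_exp, neg_le_neg_iff]
    calc q * a = q * (a / m) * m := by field_simp
      _ ≤ p * m := by gcongr; exact hp.1
  · calc 2 * C * n * m * p ^ 2 ≤ 2 * C * n * m * (a / m) ^ 2 := by gcongr; exact hp.2
      _ = 2 * C * (a ^ 2 / (m / n)) := by field_simp

lemma tendsto_exp_neg_mul_log_add_log_sq_div {q : ℝ} (hq : 0 < q) (C : ℝ) :
    Tendsto (fun r : ℝ => Real.exp (-(q * Real.log r)) + 2 * C * (Real.log r ^ 2 / r)) atTop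
      (nhds 0) := by
  have hexp : Tendsto (fun r : ℝ => Real.exp (-(q * Real.log r))) atTop (nhds 0) :=
    Real.tendsto_exp_neg_atTop_nhds_zero.comp (Real.tendsto_log_atTop.const_mul_atTop hq)
  have hlog : Tendsto (fun r : ℝ => Real.log r ^ 2 / r) atTop (nhds 0) :=
    Real.isLittleO_pow_log_id_atTop.tendsto_div_nhds_zero
  simpa using hexp.add (hlog.const_mul (2 * C))

lemma tendsto_log_div_div_nhdsGT {m : ℕ → ℕ}
    (hm : Tendsto (fun N => (m N : ℝ) / N) atTop atTop) :
    Tendsto (fun N => Real.log (m N / N) / m N) atTop (nhdsWithin 0 (Set.Ioi 0)) := by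
  refine tendsto_nhdsWithin_iff.2 ⟨?_, ?_⟩
  · have hlog : Tendsto (fun N => Real.log (m N / N) / (m N / N)) atTop (nhds 0) :=
      Real.isLittleO_log_id_atTop.tendsto_div_nhds_zero.comp hm
    have hprod := hlog.mul (tendsto_inv_atTop_nhds_zero_nat (𝕜 := ℝ))
    rw [mul_zero] at hprod
    refine hprod.congr' ?_
    filter_upwards [eventually_gt_atTop 0] with N hN
    field_simp
  · filter_upwards [hm.eventually_gt_atTop 1] with N hN
    have hmN : (m N : ℝ) ≠ 0 := fun h => by simp [h] at hN; linarith
    exact div_pos (Real.log_pos hN) (by positivity)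

end Asymptotics

theorem heavy_tailed_max_coupling_is_bully_bond_general {q : ℝ} (hq : 1 / 2 < q)
    (ν : Measure ℝ) [IsProbabilityMeasure ν]
    (hν : ∀ᶠ x in atTop, q * ν.real (Set.Ici x) < ν.real (Set.Ici (2 * x)))
    (S : ∀ N : ℕ, Finset (CoupIdx N))
    (hS : Tendsto (fun N => (#(S N) : ℝ) / N) atTop atTop) :
    Tendsto (fun N : ℕ => (Measure.pi fun _ : CoupIdx N => ν)
      {w | MaximaAreBullyBonds (JofReal w) (S N)}) atTop (nhds 1) := by
  have hq_pos : 0 < q := by linarith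
  obtain ⟨C, hC, hmean⟩ := exists_eventually_truncMean_le hq hν
  have hlevel := (tendsto_log_div_div_nhdsGT hS).eventually
    (eventually_exists_mem_Icc_of_doubling hq_pos.le (tendsto_measureReal_Ici_atTop ν)
      (measureReal_Ici_pos_of_doubling hq_pos.le hν) (hν.mono fun _ => le_of_lt)
      (hmean.and (eventually_gt_atTop 0)))
  have hlimit := ENNReal.tendsto_ofReal
    ((tendsto_exp_neg_mul_log_add_log_sq_div hq_pos C).comp hS)
  rw [ENNReal.ofReal_zero] at hlimit
  refine tendsto_measure_one_of_tendsto_measure_compl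
    (tendsto_of_tendsto_of_tendsto_of_le_of_le' tendsto_const_nhds hlimit
      (Eventually.of_forall fun _ => zero_le) ?_)
  filter_upwards [hlevel, hS.eventually_gt_atTop 1, eventually_gt_atTop 0] with
    N ⟨t, ⟨hmean_t, ht⟩, htail⟩ hSN hN
  have hN' : (0 : ℝ) < N := Nat.cast_pos.2 hN
  have hcard : (0 : ℝ) < #(S N) := hN'.trans ((one_lt_div hN').1 hSN)
  exact (pi_not_maximaAreBullyBonds_le ν hC ht hmean_t (S N)).trans (ENNReal.ofReal_le_ofReal
    (exp_neg_mul_add_mul_sq_le hC hcard hN' hq_pos.le (Real.log_nonneg hSN.le) htail))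

section LowerHalf

/-- The bonds with both endpoints among the first `⌊N/2⌋` vertices. As the endpoints are ordered, it
suffices to bound the second one. -/
def lowerHalfBonds (N : ℕ) : Finset (CoupIdx N) :=
  {b : CoupIdx N | (b.1.2 : ℕ) < N / 2}

lemma sq_div_four_le_card_lowerHalfBonds (N : ℕ) : (N / 4) ^ 2 ≤ #(lowerHalfBonds N) := by
  -- The bonds joining the first quarter of the vertices to the second quarter.
  let e (a : Fin (N / 4) × Fin (N / 4)) : CoupIdx N :=
    ⟨(⟨a.1, by omega⟩, ⟨N / 4 + a.2, by omega⟩), by simp only [Fin.mk_lt_mk]; omega⟩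
  have he : Function.Injective e := by
    rintro ⟨a, b⟩ ⟨c, d⟩ h
    simpa [e, Fin.ext_iff] using h
  have hmem : ∀ a, e a ∈ lowerHalfBonds N := fun a => by
    simp only [lowerHalfBonds, e, Finset.mem_filter_univ]
    omega
  calc (N / 4) ^ 2 = #(Finset.univ : Finset (Fin (N / 4) × Fin (N / 4))) := by simp [sq]
    _ ≤ #(lowerHalfBonds N) :=
      Finset.card_le_card_of_injOn e (fun a _ => hmem a) he.injOn

lemma tendsto_card_lowerHalfBonds_div_atTop :
    Tendsto (fun N => (#(lowerHalfBonds N) : ℝ) / N) atTop atTop := by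
  refine tendsto_atTop_mono' atTop ?_
    ((tendsto_natCast_atTop_atTop (R := ℝ)).atTop_div_const (by norm_num : (0 : ℝ) < 64))
  filter_upwards [eventually_ge_atTop 8] with N hN
  have hN_pos : (0 : ℝ) < N := by exact_mod_cast (by omega : 0 < N)
  have hquarter : (N : ℝ) / 8 ≤ (N / 4 : ℕ) := by
    rw [div_le_iff₀ (by norm_num)]
    exact_mod_cast (by omega : N ≤ N / 4 * 8)
  rw [le_div_iff₀ hN_pos]
  calc (N : ℝ) / 64 * N = (N / 8) ^ 2 := by ring
    _ ≤ ((N / 4 : ℕ) : ℝ) ^ 2 := by gcongr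
    _ ≤ #(lowerHalfBonds N) := by exact_mod_cast sq_div_four_le_card_lowerHalfBonds N

lemma maximaAreBullyBonds_lowerHalfBonds_iff {N : ℕ} {J : Fin N → Fin N → ℝ} :
    MaximaAreBullyBonds J (lowerHalfBonds N) ↔
      (∀ i j : Fin N, i < j → (j : ℕ) < N / 2 →
        (∀ k l : Fin N, k < l → (l : ℕ) < N / 2 → J k l ≤ J i j) → IsBullyBond J i j) ∧
      ∃ i j : Fin N, i < j ∧ (j : ℕ) < N / 2 ∧ IsBullyBond J i j := by
  simp [MaximaAreBullyBonds, lowerHalfBonds, and_left_comm]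

end LowerHalf

/-- for i.i.d. nonnegative heavy-tailed couplings with tail index `0 < α < 1`,
with probability tending to `1` every pair maximizing `J_{ij}` among the pairs with both
endpoints in the first `⌊N/2⌋` vertices is a bully bond, and in particular there is at least
one bully bond with both endpoints among the first `⌊N/2⌋` vertices. -/
theorem heavy_tailed_max_coupling_is_bully_bond (α : ℝ) (hα0 : 0 < α) (hα1 : α < 1)
    (L : ℝ → ℝ) (hL : ∀ a : ℝ, 0 < a → Tendsto (fun x => L (a * x) / L x) atTop (nhds 1))
    (ν : Measure ℝ) [IsProbabilityMeasure ν]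
    (hnonneg : ν {x : ℝ | x < 0} = 0)
    (htail : ∀ x : ℝ, 0 < x → (ν {y : ℝ | x ≤ y}).toReal = x ^ (-α) * L x) :
    Tendsto
      (fun N : ℕ => (Measure.pi fun _ : CoupIdx N => ν)
        {w : CoupIdx N → ℝ |
          (∀ i j : Fin N, i < j → (j : ℕ) < N / 2 →
            (∀ k l : Fin N, k < l → (l : ℕ) < N / 2 → JofReal w k l ≤ JofReal w i j) →
            IsBullyBond (JofReal w) i j) ∧
          ∃ i j : Fin N, i < j ∧ (j : ℕ) < N / 2 ∧ IsBullyBond (JofReal w) i j})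
      atTop (nhds 1) := by
  obtain ⟨q, hq, hν⟩ := exists_doubling_of_slowlyVarying hα1 (hL 2 two_pos) htail
  simpa only [maximaAreBullyBonds_lowerHalfBonds_iff] using
    heavy_tailed_max_coupling_is_bully_bond_general hq ν hν lowerHalfBonds
      tendsto_card_lowerHalfBonds_div_atTop
end
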